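/- arXiv:2211.12245 — 5 statements merged into one kernel-verified Lean document; each statement's English description precedes it below -/
import Mathlib

section
/- Let M ∈ GL₂(ℤ) (a 2×2 integer matrix with determinant ±1) have a real eigenvalue α with α ≠ 1 and α ≠ -1. Let Γ be the centralizer of M in GL₂(ℤ), i.e., the subgroup of all N ∈ GL₂(ℤ) with MN = NM (under these hypotheses M has two distinct eigenvalues α and det(M)/α, and an integer matrix N is simultaneously diagonalizable with M over ℂ if and only if it commutes with M). Then Γ is isomorphic, as a group, to U × ℤ for some finite group U. -/
theorem aux_abstract {G : Type} [Group G] (hc : ∀ x y : G, x * y = y * x) (f : G → ℝ)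
    (hf : ∀ x y, f (x * y) = f x + f y) (hfin : {g | |f g| ≤ 1}.Finite) (hne : ∃ g, f g ≠ 0) :
    ∃ (U : Type) (_ : Group U) (_ : Finite U), Nonempty (G ≃* U × Multiplicative ℤ) := by
  let F : G →* Multiplicative ℝ :=
    MonoidHom.mk' (fun g => Multiplicative.ofAdd (f g)) (fun x y => by rw [hf, ofAdd_add])
  let A : Additive G →+ ℝ := MonoidHom.toAdditiveLeft F
  have hA : ∀ g : G, A (Additive.ofMul g) = f g := fun g => rfl
  have hz : ∀ (g : G) (n : ℤ), f (g ^ n) = n * f g := by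
    intro g n
    rw [← hA, ← hA, ofMul_zpow, map_zsmul, zsmul_eq_mul]
  have hinv : ∀ g : G, f g⁻¹ = - f g := by
    intro g; have := hz g (-1); simpa using this
  have hiso : ∃ a : ℝ, 0 < a ∧ Disjoint (A.range : Set ℝ) (Set.Ioo 0 a) := by
    by_cases hS : {g | 0 < f g ∧ f g ≤ 1}.Nonempty
    · have hSf : {g | 0 < f g ∧ f g ≤ 1}.Finite := by
        refine hfin.subset ?_
        rintro g ⟨h1, h2⟩
        simp only [Set.mem_ofPred_eq, abs_of_pos h1, h2]
      obtain ⟨g, ⟨hg0, hg1⟩, hmin⟩ := Set.exists_min_image _ f hSf hS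
      refine ⟨f g, hg0, Set.disjoint_left.2 ?_⟩
      rintro x ⟨k, rfl⟩ ⟨h1, h2⟩
      have := hmin k.toMul ⟨h1, h2.le.trans hg1⟩
      exact absurd h2 (not_lt.2 this)
    · refine ⟨1, one_pos, Set.disjoint_left.2 ?_⟩
      rintro x ⟨k, rfl⟩ ⟨h1, h2⟩
      exact hS ⟨k.toMul, h1, h2.le⟩
  obtain ⟨a, ha, hd⟩ := hiso
  obtain ⟨b, hb⟩ := AddSubgroup.cyclic_of_isolated_zero ha hd
  have hbm : b ∈ A.range := by rw [hb]; exact AddSubgroup.mem_closure_singleton_self b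
  obtain ⟨g0, hg0⟩ := hbm
  have hg0' : f g0.toMul = b := hg0
  have hmul : ∀ g, ∃ n : ℤ, (n : ℝ) * b = f g := by
    intro g
    have : f g ∈ A.range := ⟨Additive.ofMul g, rfl⟩
    rw [hb, AddSubgroup.mem_closure_singleton] at this
    obtain ⟨n, hn⟩ := this
    exact ⟨n, by rw [← hn, zsmul_eq_mul]⟩
  have hb0 : b ≠ 0 := by
    rintro rfl
    obtain ⟨g, hg⟩ := hne
    obtain ⟨n, hn⟩ := hmul g
    exact hg (by rw [← hn, mul_zero])
  have hker : ∀ g, g ∈ F.ker ↔ f g = 0 := fun g => Iff.rfl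
  have hkf : Finite F.ker := by
    refine (hfin.subset (s := {g | |f g| ≤ 1}) (t := (F.ker : Set G)) ?_).to_subtype
    intro g hg
    have : f g = 0 := (hker g).1 hg
    simp [this]
  let Ψ : F.ker × Multiplicative ℤ →* G := MonoidHom.mk'
    (fun u => (u.1 : G) * g0.toMul ^ (u.2.toAdd)) (by
      rintro ⟨u, m⟩ ⟨v, n⟩
      simp only [Prod.mk_mul_mk, Subgroup.coe_mul, toAdd_mul, zpow_add]
      rw [mul_assoc, mul_assoc, ← mul_assoc (v : G), hc (v : G) (g0.toMul ^ m.toAdd), mul_assoc])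
  have hΨ : ∀ u, Ψ u = (u.1 : G) * g0.toMul ^ (u.2.toAdd) := fun _ => rfl
  refine ⟨F.ker, inferInstance, hkf, ⟨(MulEquiv.ofBijective Ψ ⟨?_, ?_⟩).symm⟩⟩
  · rw [injective_iff_map_eq_one]
    rintro ⟨u, m⟩ h
    rw [hΨ] at h
    have h1 : f 1 = 0 := by simpa using hf 1 1
    have h2 := congrArg f h
    rw [hf, hz, hg0', (hker _).1 u.2, h1, zero_add] at h2
    have hm : m.toAdd = 0 := by
      rcases mul_eq_zero.1 h2 with h | h
      · exact_mod_cast h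
      · exact absurd h hb0
    simp only [hm, zpow_zero, mul_one] at h
    ext
    · exact h
    · exact hm
  · intro g
    obtain ⟨n, hn⟩ := hmul g
    refine ⟨(⟨g * (g0.toMul ^ n)⁻¹, ?_⟩, Multiplicative.ofAdd n), ?_⟩
    · rw [hker, hf, hinv, hz, hg0', hn]; ring
    · rw [hΨ]; simp

/-- Let `M ∈ GL₂(ℤ)` have a real eigenvalue `α ≠ ±1`, and let `Γ` be the centralizer
of `M` in `GL₂(ℤ)`. Then `Γ ≃ U × ℤ` for some finite group `U`. -/
theorem centralizer_GL2_iso_finite_prod_int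
    (M : GL (Fin 2) ℤ)
    (α : ℝ) (hα1 : α ≠ 1) (hα2 : α ≠ -1)
    (hroot : Polynomial.aeval α (Matrix.charpoly (M : Matrix (Fin 2) (Fin 2) ℤ)) = 0) :
    ∃ (U : Type) (_ : Group U) (_ : Finite U),
      Nonempty ((Subgroup.centralizer ({M} : Set (GL (Fin 2) ℤ))) ≃* U × Multiplicative ℤ) := by
  classical
  set a : ℤ := (M : Matrix (Fin 2) (Fin 2) ℤ) 0 0 with ha
  set b : ℤ := (M : Matrix (Fin 2) (Fin 2) ℤ) 0 1 with hb
  set c : ℤ := (M : Matrix (Fin 2) (Fin 2) ℤ) 1 0 with hc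
  set d : ℤ := (M : Matrix (Fin 2) (Fin 2) ℤ) 1 1 with hd
  have hdetGL : ∀ N : GL (Fin 2) ℤ, N 0 0 * N 1 1 - N 0 1 * N 1 0 = 1 ∨
      N 0 0 * N 1 1 - N 0 1 * N 1 0 = -1 := by
    intro N
    have h : IsUnit (N : Matrix (Fin 2) (Fin 2) ℤ).det :=
      (Matrix.isUnit_iff_isUnit_det _).1 N.isUnit
    rw [Matrix.det_fin_two] at h
    exact Int.isUnit_iff.1 h
  have hdet : a * d - b * c = 1 ∨ a * d - b * c = -1 := hdetGL M
  have hr : α ^ 2 - (a + d) * α + (a * d - b * c) = 0 := by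
    rw [Matrix.charpoly_fin_two, Matrix.det_fin_two, Matrix.trace_fin_two] at hroot
    simpa using hroot
  have hint : ∀ z : ℤ, α ≠ z := by
    rintro z rfl
    have h : z * (a + d - z) = a * d - b * c := by
      have : (z : ℝ) * (a + d - z) = a * d - b * c := by linarith
      exact_mod_cast this
    have hu : IsUnit z := by
      apply isUnit_of_dvd_unit (Dvd.intro _ h)
      exact Int.isUnit_iff.2 hdet
    rcases Int.isUnit_iff.1 hu with rfl | rfl
    · exact hα1 (by simp)
    · exact hα2 (by simp)
  have hirr : Irrational α := by
    let p : Polynomial ℤ := Matrix.charpoly (M : Matrix (Fin 2) (Fin 2) ℤ)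
    have hi : IsIntegral ℤ α := ⟨p, Matrix.charpoly_monic _, hroot⟩
    rintro ⟨q, hq⟩
    have hq' : IsIntegral ℤ q := by
      rw [← hq] at hi
      exact (isIntegral_algebraMap_iff (A := ℚ) (B := ℝ) (algebraMap ℚ ℝ).injective).1 hi
    obtain ⟨z, hz⟩ := IsIntegrallyClosed.isIntegral_iff.1 hq'
    exact hint z (by rw [← hq, ← hz]; simp)
  have hc0 : c ≠ 0 := by
    intro h
    have : (α - a) * (α - d) = 0 := by
      have : (c : ℝ) = 0 := by exact_mod_cast h
      rw [this] at hr; linarith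
    rcases mul_eq_zero.1 this with h | h
    · exact hint a (by linarith)
    · exact hint d (by linarith)
  have hcR : (c : ℝ) ≠ 0 := by exact_mod_cast hc0
  obtain ⟨β, hβ⟩ : ∃ β : ℝ, α = a + c * β := ⟨(α - a) / c, by field_simp; ring⟩
  have hβirr : ∀ x y : ℤ, (x : ℝ) + y * β = 0 → x = 0 ∧ y = 0 := by
    intro x y h
    have hy : y = 0 := by
      by_contra hy
      have hyR : (y : ℝ) ≠ 0 := by exact_mod_cast hy
      apply hirr
      refine ⟨a - c * x / y, ?_⟩
      push_cast
      rw [hβ]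
      field_simp
      linear_combination (-(c : ℝ)) * h
    subst hy
    refine ⟨?_, rfl⟩
    have : (x : ℝ) = 0 := by simpa using h
    exact_mod_cast this
  have hβq : c * β ^ 2 + (a - d) * β = b := by
    apply mul_left_cancel₀ hcR
    rw [hβ] at hr
    linear_combination hr
  have hcomm : ∀ N ∈ Subgroup.centralizer ({M} : Set (GL (Fin 2) ℤ)),
      c * N 0 1 = b * N 1 0 ∧ c * N 1 1 = c * N 0 0 + (d - a) * N 1 0 := by
    intro N hN
    have h := Subgroup.mem_centralizer_singleton_iff.1 hN
    have h' : (N : Matrix (Fin 2) (Fin 2) ℤ) * (M : Matrix (Fin 2) (Fin 2) ℤ) = (M : Matrix (Fin 2) (Fin 2) ℤ) * (N : Matrix (Fin 2) (Fin 2) ℤ) := by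
      rw [← Units.val_mul, ← Units.val_mul, h]
    have h00 := congrFun (congrFun h' 0) 0
    have h10 := congrFun (congrFun h' 1) 0
    simp only [Matrix.mul_apply, Fin.sum_univ_two, ← ha, ← hb, ← hc, ← hd] at h00 h10
    constructor
    · linear_combination h00
    · linear_combination h10
  let Γ := Subgroup.centralizer ({M} : Set (GL (Fin 2) ℤ))
  let l : Γ → ℝ := fun N => ((N : GL (Fin 2) ℤ) 0 0 : ℝ) + ((N : GL (Fin 2) ℤ) 1 0 : ℝ) * β
  have hl : ∀ N : Γ, l N = ((N : GL (Fin 2) ℤ) 0 0 : ℝ) + ((N : GL (Fin 2) ℤ) 1 0 : ℝ) * β :=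
    fun _ => rfl
  have hcommR : ∀ N : Γ, (c : ℝ) * (N : GL (Fin 2) ℤ) 0 1 = b * (N : GL (Fin 2) ℤ) 1 0 ∧
      (c : ℝ) * (N : GL (Fin 2) ℤ) 1 1 = c * (N : GL (Fin 2) ℤ) 0 0 + (d - a) * (N : GL (Fin 2) ℤ) 1 0 := by
    intro N
    obtain ⟨h1, h2⟩ := hcomm N.1 N.2
    exact ⟨by exact_mod_cast h1, by exact_mod_cast h2⟩
  have hlmul : ∀ N N' : Γ, l (N * N') = l N * l N' := by
    intro N N'
    obtain ⟨h1, h2⟩ := hcommR N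
    simp only [hl, Subgroup.coe_mul, Units.val_mul, Matrix.mul_apply, Fin.sum_univ_two]
    push_cast
    apply mul_left_cancel₀ hcR
    linear_combination ((N' : GL (Fin 2) ℤ) 1 0 : ℝ) * h1 + ((N' : GL (Fin 2) ℤ) 1 0 : ℝ) * β * h2
      - ((N : GL (Fin 2) ℤ) 1 0 : ℝ) * ((N' : GL (Fin 2) ℤ) 1 0 : ℝ) * hβq
  have hpr : ∀ N N' : Γ, (N : GL (Fin 2) ℤ) 0 0 = (N' : GL (Fin 2) ℤ) 0 0 →
      (N : GL (Fin 2) ℤ) 1 0 = (N' : GL (Fin 2) ℤ) 1 0 → N = N' := by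
    intro N N' h1 h2
    obtain ⟨k1, k2⟩ := hcomm N.1 N.2
    obtain ⟨k1', k2'⟩ := hcomm N'.1 N'.2
    apply Subtype.ext
    apply Units.ext
    ext i j
    fin_cases i <;> fin_cases j
    · exact h1
    · apply mul_left_cancel₀ hc0
      simp only [Fin.zero_eta, Fin.mk_one]
      rw [k1, k1', h2]
    · exact h2
    · apply mul_left_cancel₀ hc0
      simp only [Fin.mk_one]
      rw [k2, k2', h1, h2]
  have hlinj : Function.Injective l := by
    intro N N' h
    rw [hl, hl] at h
    obtain ⟨h1, h2⟩ := hβirr ((N : GL (Fin 2) ℤ) 0 0 - (N' : GL (Fin 2) ℤ) 0 0)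
      ((N : GL (Fin 2) ℤ) 1 0 - (N' : GL (Fin 2) ℤ) 1 0) (by push_cast; linear_combination h)
    exact hpr N N' (sub_eq_zero.1 h1) (sub_eq_zero.1 h2)
  -- the conjugate of β
  obtain ⟨γ, hγ⟩ : ∃ γ : ℝ, c * (β + γ) = d - a := ⟨(d - a) / c - β, by field_simp; ring⟩
  have hβγ : β - γ ≠ 0 := by
    intro h
    have := (hβirr (a - d) (2 * c) (by push_cast; linear_combination hγ + c * h)).2
    omega
  have hnorm : ∀ N : Γ, |l N| * |((N : GL (Fin 2) ℤ) 0 0 : ℝ) + ((N : GL (Fin 2) ℤ) 1 0 : ℝ) * γ| = 1 := by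
    intro N
    obtain ⟨h1, h2⟩ := hcommR N
    rw [← abs_mul]
    have key : l N * (((N : GL (Fin 2) ℤ) 0 0 : ℝ) + ((N : GL (Fin 2) ℤ) 1 0 : ℝ) * γ) =
        (((N : GL (Fin 2) ℤ) 0 0 * (N : GL (Fin 2) ℤ) 1 1
          - (N : GL (Fin 2) ℤ) 0 1 * (N : GL (Fin 2) ℤ) 1 0 : ℤ) : ℝ) := by
      rw [hl]; push_cast
      apply mul_left_cancel₀ hcR
      generalize ((N : GL (Fin 2) ℤ) 0 0 : ℝ) = p at *
      generalize ((N : GL (Fin 2) ℤ) 1 0 : ℝ) = r at *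
      linear_combination r * h1 - p * h2 + (p * r + r ^ 2 * β) * hγ - r ^ 2 * hβq
    rw [key]
    rcases hdetGL N with h | h <;> rw [h] <;> simp
  have hl0 : ∀ N, l N ≠ 0 := by
    intro N h
    have := hnorm N
    simp [h] at this
  refine aux_abstract (G := Γ) ?_ (fun N => Real.log |l N|) ?_ ?_ ?_
  · intro x y
    apply hlinj
    rw [hlmul, hlmul, mul_comm]
  · intro x y
    show Real.log |l (x * y)| = _
    rw [hlmul, abs_mul, Real.log_mul (abs_ne_zero.2 (hl0 x)) (abs_ne_zero.2 (hl0 y))]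
  · obtain ⟨R, hR⟩ : ∃ R : ℤ, 6 / |β - γ| ≤ R := ⟨_, Int.le_ceil _⟩
    obtain ⟨P, hP⟩ : ∃ P : ℤ, 3 + R * |β| ≤ P := ⟨_, Int.le_ceil _⟩
    refine Set.Finite.of_injOn (f := fun N : Γ => ((N : GL (Fin 2) ℤ) 0 0, (N : GL (Fin 2) ℤ) 1 0))
      (t := Set.Icc (-P) P ×ˢ Set.Icc (-R) R) ?_ ?_ ((Set.finite_Icc _ _).prod (Set.finite_Icc _ _))
    · intro N hN
      have hN' : abs (Real.log |l N|) ≤ 1 := hN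
      have hpos : 0 < |l N| := abs_pos.2 (hl0 N)
      obtain ⟨hlo, hhi⟩ := abs_le.1 hN'
      have he : Real.exp 1 < 3 := Real.exp_one_lt_three
      have h1 : |l N| ≤ 3 := ((Real.log_le_iff_le_exp hpos).1 hhi).trans he.le
      have hn := hnorm N
      have h2 : |((N : GL (Fin 2) ℤ) 0 0 : ℝ) + ((N : GL (Fin 2) ℤ) 1 0 : ℝ) * γ| ≤ 3 := by
        rw [eq_inv_of_mul_eq_one_right hn]
        have : Real.log (|l N|⁻¹) ≤ 1 := by rw [Real.log_inv]; linarith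
        exact ((Real.log_le_iff_le_exp (inv_pos.2 hpos)).1 this).trans he.le
      have hr1 : |((N : GL (Fin 2) ℤ) 1 0 : ℝ)| ≤ R := by
        refine le_trans ?_ hR
        rw [le_div_iff₀ (abs_pos.2 hβγ), ← abs_mul]
        have : ((N : GL (Fin 2) ℤ) 1 0 : ℝ) * (β - γ) = l N - (((N : GL (Fin 2) ℤ) 0 0 : ℝ) + ((N : GL (Fin 2) ℤ) 1 0 : ℝ) * γ) := by
          rw [hl]; ring
        rw [this]
        refine (abs_sub _ _).trans ?_
        linarith
      have hp1 : |((N : GL (Fin 2) ℤ) 0 0 : ℝ)| ≤ P := by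
        refine le_trans ?_ hP
        have : ((N : GL (Fin 2) ℤ) 0 0 : ℝ) = l N - ((N : GL (Fin 2) ℤ) 1 0 : ℝ) * β := by
          rw [hl]; ring
        rw [this]
        refine (abs_sub _ _).trans ?_
        rw [abs_mul]
        have := mul_le_mul_of_nonneg_right hr1 (abs_nonneg β)
        linarith
      have hr2 : |(N : GL (Fin 2) ℤ) 1 0| ≤ R := by exact_mod_cast hr1
      have hp2 : |(N : GL (Fin 2) ℤ) 0 0| ≤ P := by exact_mod_cast hp1
      exact ⟨abs_le.1 hp2, abs_le.1 hr2⟩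
    · intro N _ N' _ h
      exact hpr N N' (congrArg Prod.fst h) (congrArg Prod.snd h)
  · refine ⟨⟨M, Subgroup.mem_centralizer_singleton_iff.2 rfl⟩, ?_⟩
    have : l ⟨M, Subgroup.mem_centralizer_singleton_iff.2 rfl⟩ = α := by
      rw [hl, hβ]
    simp only [this, Real.log_abs]
    exact Real.log_ne_zero.2 ⟨by simpa using hint 0, hα1, hα2⟩
end

section
/- Let M ∈ GL₂(ℤ) (a 2×2 integer matrix with determinant ±1) have a real eigenvalue α with α ≠ 1 and α ≠ -1, and let Γ be the centralizer of M in GL₂(ℤ). Then the cyclic subgroup M^ℤ = {M^k : k ∈ ℤ} generated by M has finite index in Γ; equivalently, since Γ is abelian, the quotient group Γ/M^ℤ is finite. -/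
/-- The value of the eigencharacter attached to the slope `y`. -/
noncomputable def chiFun (y : ℝ) (N : GL (Fin 2) ℤ) : ℝ :=
  ((N : Matrix (Fin 2) (Fin 2) ℤ) 0 0 : ℝ) + ((N : Matrix (Fin 2) (Fin 2) ℤ) 0 1 : ℝ) * y

theorem comm_entries (M N : GL (Fin 2) ℤ)
    (h : N ∈ Subgroup.centralizer ({M} : Set (GL (Fin 2) ℤ))) :
    M.1 0 1 * N.1 1 0 = M.1 1 0 * N.1 0 1 ∧
    M.1 0 1 * (N.1 1 1 - N.1 0 0) = (M.1 1 1 - M.1 0 0) * N.1 0 1 := by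
  rw [Subgroup.mem_centralizer_singleton_iff] at h
  have h1 : N.1 * M.1 = M.1 * N.1 := by
    have := congrArg Units.val h
    simpa using this
  have h00 := congrFun (congrFun h1 0) 0
  have h01 := congrFun (congrFun h1 0) 1
  simp only [Matrix.mul_apply, Fin.sum_univ_two] at h00 h01
  constructor <;> linarith

/-- The eigencharacter on the centralizer. -/
noncomputable def chiHom (M : GL (Fin 2) ℤ) (y : ℝ) (hb : M.1 0 1 ≠ 0)
    (hy : (M.1 0 1 : ℝ) * y ^ 2 = (M.1 1 0 : ℝ) + ((M.1 1 1 : ℝ) - M.1 0 0) * y) :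
    Subgroup.centralizer ({M} : Set (GL (Fin 2) ℤ)) →* ℝ where
  toFun N := chiFun y N.1
  map_one' := by simp [chiFun]
  map_mul' := by
    rintro ⟨N, hN⟩ ⟨K, hK⟩
    obtain ⟨h1, h2⟩ := comm_entries M K hK
    have h1 : (M.1 0 1 : ℝ) * K.1 1 0 = M.1 1 0 * K.1 0 1 := by exact_mod_cast h1
    have h2 : (M.1 0 1 : ℝ) * (K.1 1 1 - K.1 0 0) = (M.1 1 1 - M.1 0 0) * K.1 0 1 := by
      exact_mod_cast h2
    have hb' : (M.1 0 1 : ℝ) ≠ 0 := by exact_mod_cast hb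
    simp only [chiFun, Subgroup.coe_mul, MulMemClass.mk_mul_mk, Units.val_mul, Matrix.mul_apply,
      Fin.sum_univ_two]
    push_cast
    apply mul_left_cancel₀ hb'
    linear_combination (N.1 0 1 : ℝ) * h1 + (N.1 0 1 : ℝ) * y * h2 -
      (N.1 0 1 : ℝ) * (K.1 0 1 : ℝ) * hy

theorem det_abs (N : GL (Fin 2) ℤ) :
    |((N.1 0 0 : ℝ) * N.1 1 1 - N.1 0 1 * N.1 1 0)| = 1 := by
  have h : IsUnit N.1.det := (Matrix.isUnit_iff_isUnit_det _).1 N.isUnit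
  have h2 := Int.isUnit_iff_abs_eq.1 h
  rw [Matrix.det_fin_two] at h2
  exact_mod_cast h2

theorem main_aux (M : GL (Fin 2) ℤ) (α : ℝ) (hα : 1 < |α|)
    (hr : α ^ 2 - ((M.1 0 0 : ℝ) + M.1 1 1) * α +
      ((M.1 0 0 : ℝ) * M.1 1 1 - M.1 0 1 * M.1 1 0) = 0)
    (hM : M ∈ Subgroup.centralizer ({M} : Set (GL (Fin 2) ℤ))) :
    Finite ((Subgroup.centralizer ({M} : Set (GL (Fin 2) ℤ))) ⧸
      Subgroup.zpowers (⟨M, hM⟩ : Subgroup.centralizer ({M} : Set (GL (Fin 2) ℤ)))) := by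
  have hdet := det_abs M
  have hb : M.1 0 1 ≠ 0 := by
    intro hb
    rw [hb] at hr hdet
    have hz : (M.1 0 0 * M.1 1 1 : ℤ) = 1 ∨ (M.1 0 0 * M.1 1 1 : ℤ) = -1 := by
      have : |M.1 0 0 * M.1 1 1| = 1 := by
        simp only [Int.cast_zero, zero_mul, sub_zero] at hdet
        exact_mod_cast hdet
      exact (abs_eq zero_le_one).1 this
    have hu : IsUnit (M.1 0 0 * M.1 1 1) := Int.isUnit_iff.2 hz
    obtain ⟨ha, hd⟩ := IsUnit.mul_iff.1 hu
    have hf : (α - M.1 0 0) * (α - M.1 1 1) = 0 := by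
      push_cast at hr
      linarith
    have key : ∀ z : ℤ, IsUnit z → α ≠ z := by
      rintro z hz rfl
      have := Int.isUnit_iff_abs_eq.1 hz
      have h' : |(z : ℝ)| = 1 := by exact_mod_cast this
      linarith
    rcases mul_eq_zero.1 hf with h | h
    · exact key _ ha (by linarith)
    · exact key _ hd (by linarith)
  have hb' : (M.1 0 1 : ℝ) ≠ 0 := by exact_mod_cast hb
  set a : ℝ := (M.1 0 0 : ℝ) with ha
  set b : ℝ := (M.1 0 1 : ℝ) with hbdef
  set c : ℝ := (M.1 1 0 : ℝ) with hc
  set d : ℝ := (M.1 1 1 : ℝ) with hd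
  obtain ⟨β, hβ⟩ : ∃ β, β = a + d - α := ⟨_, rfl⟩
  have hαβ : α * β = a * d - b * c := by rw [hβ]; linarith
  have hne : α - β ≠ 0 := by
    intro h
    have hh : β = α := by linarith
    rw [← hαβ, hh, abs_mul] at hdet
    nlinarith
  obtain ⟨y, hy⟩ : ∃ y, y = (α - a) / b := ⟨_, rfl⟩
  obtain ⟨z, hz⟩ : ∃ z, z = (β - a) / b := ⟨_, rfl⟩
  have hby : b * y = α - a := by rw [hy]; field_simp
  have hbz : b * z = β - a := by rw [hz]; field_simp
  have hyy : b * y ^ 2 = c + (d - a) * y := by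
    apply mul_left_cancel₀ hb'
    linear_combination (b * y + (α - a) - (d - a)) * hby + hr
  have hchi : ∀ N : Subgroup.centralizer ({M} : Set (GL (Fin 2) ℤ)),
      |chiFun y N.1| * |chiFun z N.1| = 1 := by
    rintro ⟨N, hN⟩
    obtain ⟨h1, h2⟩ := comm_entries M N hN
    have h1 : b * N.1 1 0 = c * N.1 0 1 := by simp only [hbdef, hc]; exact_mod_cast h1
    have h2 : b * (N.1 1 1 - N.1 0 0) = (d - a) * N.1 0 1 := by
      simp only [hbdef, ha, hd]; exact_mod_cast h2
    rw [← abs_mul, ← det_abs N]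
    congr 1
    simp only [chiFun]
    have e1 : b * (y + z) = d - a := by rw [mul_add, hby, hbz, hβ]; ring
    have e2 : b * (y * z) = - c := by
      apply mul_left_cancel₀ hb'
      have : b * (b * (y * z)) = (b * y) * (b * z) := by ring
      rw [this, hby, hbz]
      linear_combination hαβ - a * hβ
    apply mul_left_cancel₀ hb'
    linear_combination (N.1 0 0 : ℝ) * N.1 0 1 * e1 + (N.1 0 1 : ℝ) ^ 2 * e2 -
      (N.1 0 0 : ℝ) * h2 + (N.1 0 1 : ℝ) * h1
  let f := (chiHom M y hb hyy)
  let g := f.toHomUnits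
  have hg : ∀ N, ((g N : ℝˣ) : ℝ) = chiFun y N.1 := fun N => rfl
  let m : Subgroup.centralizer ({M} : Set (GL (Fin 2) ℤ)) := ⟨M, hM⟩
  have hgm : ((g m : ℝˣ) : ℝ) = α := by
    rw [hg]
    change a + b * y = α
    linarith
  let S : Set (Subgroup.centralizer ({M} : Set (GL (Fin 2) ℤ))) :=
    {N | |chiFun y N.1| ≤ |α| ∧ |chiFun z N.1| ≤ 1}
  have hS : S.Finite := by
    obtain ⟨B, hB⟩ : ∃ B : ℝ, B = |b| * (|α| + 1) / |α - β| := ⟨_, rfl⟩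
    obtain ⟨C, hC⟩ : ∃ C : ℤ, B ≤ C ∧ |α| + B * |y| ≤ C := by
      obtain ⟨C, hC⟩ := exists_int_gt (max B (|α| + B * |y|))
      exact ⟨C, (le_max_left _ _).trans hC.le, (le_max_right _ _).trans hC.le⟩
    apply Set.Finite.of_finite_image (f := fun N => (N.1.1 0 0, N.1.1 0 1))
    · apply Set.Finite.subset ((Set.finite_Icc (-C) C).prod (Set.finite_Icc (-C) C))
      rintro _ ⟨N, ⟨h1, h2⟩, rfl⟩
      have hq : |(N.1.1 0 1 : ℝ)| ≤ B := by
        have e : (N.1.1 0 1 : ℝ) * (α - β) = b * (chiFun y N.1 - chiFun z N.1) := by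
          simp only [chiFun]
          linear_combination (N.1.1 0 1 : ℝ) * (hbz - hby)
        rw [hB, le_div_iff₀ (abs_pos.2 hne), ← abs_mul, e, abs_mul]
        apply mul_le_mul_of_nonneg_left _ (abs_nonneg _)
        exact (abs_sub _ _).trans (add_le_add h1 h2)
      have hp : |(N.1.1 0 0 : ℝ)| ≤ |α| + B * |y| := by
        have e : (N.1.1 0 0 : ℝ) = chiFun y N.1 - N.1.1 0 1 * y := by
          simp only [chiFun]; ring
        rw [e]
        refine (abs_sub _ _).trans (add_le_add h1 ?_)
        rw [abs_mul]
        exact mul_le_mul_of_nonneg_right hq (abs_nonneg _)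
      have hp' : |N.1.1 0 0| ≤ C := by exact_mod_cast hp.trans hC.2
      have hq' : |N.1.1 0 1| ≤ C := by exact_mod_cast hq.trans hC.1
      exact ⟨abs_le.1 hp', abs_le.1 hq'⟩
    · rintro ⟨N, hN⟩ - ⟨K, hK⟩ - h
      simp only [Prod.mk.injEq] at h
      obtain ⟨h00, h01⟩ := h
      obtain ⟨n1, n2⟩ := comm_entries M N hN
      obtain ⟨k1, k2⟩ := comm_entries M K hK
      have h10 : N.1 1 0 = K.1 1 0 := by
        apply mul_left_cancel₀ hb
        rw [n1, k1, h01]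
      have h11 : N.1 1 1 = K.1 1 1 := by
        have : N.1 1 1 - N.1 0 0 = K.1 1 1 - K.1 0 0 := by
          apply mul_left_cancel₀ hb
          rw [n2, k2, h01]
        linarith
      apply Subtype.ext
      apply Units.ext
      ext i j
      fin_cases i <;> fin_cases j <;> assumption
  have : Finite S := hS
  apply Finite.of_surjective (fun N : S => (QuotientGroup.mk N.1 :
    (Subgroup.centralizer ({M} : Set (GL (Fin 2) ℤ))) ⧸ Subgroup.zpowers m))
  intro q
  obtain ⟨N, rfl⟩ := QuotientGroup.mk_surjective q
  have hpos : 0 < |chiFun y N.1| := by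
    rcases (abs_nonneg (chiFun y N.1)).eq_or_lt with h | h
    · have := hchi N
      rw [← h] at this
      simp at this
    · exact h
  obtain ⟨k, hk1, hk2⟩ := exists_mem_Ico_zpow hpos hα
  have hα0 : 0 < |α| := by linarith
  have hval : |chiFun y (N * m ^ (-k)).1| = |chiFun y N.1| * |α| ^ (-k) := by
    rw [← hg, map_mul, map_zpow, Units.val_mul, Units.val_zpow_eq_zpow_val, hgm, hg, abs_mul,
      abs_zpow]
  have hlow : 1 ≤ |chiFun y (N * m ^ (-k)).1| := by
    rw [hval, zpow_neg, ← div_eq_mul_inv, le_div_iff₀ (zpow_pos hα0 _), one_mul]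
    exact hk1
  have hup : |chiFun y (N * m ^ (-k)).1| ≤ |α| := by
    rw [hval, zpow_neg, ← div_eq_mul_inv, div_le_iff₀ (zpow_pos hα0 _)]
    rw [zpow_add_one₀ hα0.ne'] at hk2
    linarith
  refine ⟨⟨N * m ^ (-k), hup, ?_⟩, ?_⟩
  · have := hchi (N * m ^ (-k))
    nlinarith [abs_nonneg (chiFun z (N * m ^ (-k)).1)]
  · apply QuotientGroup.eq.2
    refine ⟨k, ?_⟩
    simp


/-- Let `M ∈ GL₂(ℤ)` have a real eigenvalue `α ≠ ±1`, and let `Γ` be the centralizer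
of `M` in `GL₂(ℤ)`. Then the cyclic subgroup generated by `M` has finite index in `Γ`,
i.e. the quotient `Γ / M^ℤ` is finite. -/
theorem centralizer_GL2_quotient_zpowers_finite
    (M : GL (Fin 2) ℤ)
    (α : ℝ) (hα1 : α ≠ 1) (hα2 : α ≠ -1)
    (hroot : Polynomial.aeval α (Matrix.charpoly (M : Matrix (Fin 2) (Fin 2) ℤ)) = 0)
    (hM : M ∈ Subgroup.centralizer ({M} : Set (GL (Fin 2) ℤ))) :
    Finite ((Subgroup.centralizer ({M} : Set (GL (Fin 2) ℤ))) ⧸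
      Subgroup.zpowers (⟨M, hM⟩ : Subgroup.centralizer ({M} : Set (GL (Fin 2) ℤ)))) := by
  have hr : α ^ 2 - ((M.1 0 0 : ℝ) + M.1 1 1) * α +
      ((M.1 0 0 : ℝ) * M.1 1 1 - M.1 0 1 * M.1 1 0) = 0 := by
    rw [Matrix.charpoly_fin_two] at hroot
    simpa [Matrix.trace_fin_two, Matrix.det_fin_two] using hroot
  have hdet := det_abs M
  have hprod : |α| * |(M.1 0 0 : ℝ) + M.1 1 1 - α| = 1 := by
    rw [← abs_mul, ← hdet]
    congr 1
    linarith
  rcases lt_trichotomy |α| 1 with h | h | h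
  · refine main_aux M ((M.1 0 0 : ℝ) + M.1 1 1 - α) ?_ (by linear_combination hr) hM
    by_contra hle
    nlinarith [abs_nonneg α, abs_nonneg ((M.1 0 0 : ℝ) + M.1 1 1 - α)]
  · rcases (abs_eq zero_le_one).1 h with h | h
    · exact absurd h hα1
    · exact absurd h hα2
  · exact main_aux M α h hr hM
end

section
/- Let M ∈ GL₃(ℤ) (a 3×3 integer matrix with determinant ±1) have a real eigenvalue α with α ≠ 1 and α ≠ -1, and a nonreal complex eigenvalue β (so M is diagonalizable over ℂ with three distinct eigenvalues α, β, and the conjugate of β). Let Γ be the centralizer of M in GL₃(ℤ), i.e., the subgroup of all N ∈ GL₃(ℤ) with MN = NM. Then Γ is isomorphic, as a group, to U × ℤ for some finite group U. -/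
lemma split_aux {G : Type} [Group G] (hc : ∀ a b : G, a * b = b * a) (L : G → ℝ)
    (hL : ∀ a b, L (a * b) = L a + L b) (hfin : {g | |L g| ≤ 1}.Finite)
    (g0 : G) (h0 : L g0 ≠ 0) :
    ∃ (U : Type) (_ : Group U) (_ : Finite U), Nonempty (G ≃* U × Multiplicative ℤ) := by
  let F : G →* Multiplicative ℝ :=
    MonoidHom.mk' (fun g => Multiplicative.ofAdd (L g)) (fun a b => by simp [hL])
  have hF : ∀ g, F g = Multiplicative.ofAdd (L g) := fun _ => rfl
  have hL1 : L 1 = 0 := by have := hL 1 1; simp at this; exact this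
  have hLinv : ∀ a, L a⁻¹ = - L a := fun a => by
    have := hL a a⁻¹; rw [mul_inv_cancel, hL1] at this; linarith
  let H : AddSubgroup ℝ :=
    { carrier := Set.range L
      zero_mem' := ⟨1, hL1⟩
      add_mem' := by rintro _ _ ⟨a, rfl⟩ ⟨b, rfl⟩; exact ⟨a * b, hL a b⟩
      neg_mem' := by rintro _ ⟨a, rfl⟩; exact ⟨a⁻¹, hLinv a⟩ }
  have hH : ∀ x, x ∈ H ↔ ∃ g, L g = x := fun x => Iff.rfl
  obtain ⟨ε, hε, hdis⟩ : ∃ ε : ℝ, 0 < ε ∧ Disjoint (H : Set ℝ) (Set.Ioo 0 ε) := by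
    have hS : (L '' {g | |L g| ≤ 1} ∩ Set.Ioi 0).Finite := (hfin.image L).inter_of_left _
    by_cases hne : (L '' {g | |L g| ≤ 1} ∩ Set.Ioi 0).Nonempty
    · obtain ⟨m, hm, hmin⟩ := Set.exists_min_image _ id hS hne
      refine ⟨m, hm.2, Set.disjoint_left.2 ?_⟩
      rintro x ⟨g, rfl⟩ ⟨hx0, hxm⟩
      obtain ⟨⟨g', hg', rfl⟩, hpos⟩ := hm
      have h1 : |L g'| ≤ 1 := hg'
      have := hmin (L g) ⟨⟨g, by
        show |L g| ≤ 1
        rw [abs_of_pos hx0]; rw [abs_of_pos hpos] at h1; linarith, rfl⟩, hx0⟩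
      simp at this; linarith
    · refine ⟨1, one_pos, Set.disjoint_left.2 ?_⟩
      rintro x ⟨g, rfl⟩ ⟨hx0, hxm⟩
      exact hne ⟨L g, ⟨g, by show |L g| ≤ 1; rw [abs_of_pos hx0]; exact hxm.le, rfl⟩, hx0⟩
  obtain ⟨a, ha⟩ := AddSubgroup.cyclic_of_isolated_zero hε hdis
  have hmem : ∀ x, x ∈ H ↔ ∃ k : ℤ, k • a = x := fun x => by
    rw [ha, AddSubgroup.mem_closure_singleton]
  obtain ⟨g, hg⟩ : ∃ g, L g = a := (hH a).1 ((hmem a).2 ⟨1, by simp⟩)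
  have ha0 : a ≠ 0 := by
    rintro rfl
    obtain ⟨k, hk⟩ := (hmem (L g0)).1 ⟨g0, rfl⟩
    simp at hk; exact h0 hk.symm
  have hLz : ∀ k : ℤ, L (g ^ k) = k • a := fun k => by
    have := map_zpow F g k
    rw [hF, hF, hg, ← ofAdd_zsmul] at this
    exact Multiplicative.ofAdd.injective this
  have hker : ∀ u, u ∈ F.ker ↔ L u = 0 := fun u => by
    rw [MonoidHom.mem_ker, hF, ofAdd_eq_one]
  refine ⟨F.ker, inferInstance, ?_, ?_⟩
  · have : ((F.ker : Set G)).Finite := hfin.subset (fun u hu => by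
      have : L u = 0 := (hker u).1 hu
      simp [this])
    exact this.to_subtype
  · let Φ : F.ker × Multiplicative ℤ →* G := MonoidHom.mk'
      (fun p => (p.1 : G) * g ^ (Multiplicative.toAdd p.2)) (by
        rintro ⟨u, k⟩ ⟨v, l⟩
        simp only [Prod.mk_mul_mk, Subgroup.coe_mul, toAdd_mul, zpow_add]
        rw [mul_assoc, mul_assoc, ← mul_assoc (v : G), hc (v : G), mul_assoc])
    have hΦ : ∀ p, Φ p = (p.1 : G) * g ^ (Multiplicative.toAdd p.2) := fun _ => rfl
    refine ⟨(MulEquiv.ofBijective Φ ⟨?_, ?_⟩).symm⟩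
    · rw [injective_iff_map_eq_one]
      rintro ⟨⟨u, hu⟩, k⟩ h
      rw [hΦ] at h
      simp only at h
      have h2 := congrArg L h
      rw [hL, hL1, (hker u).1 hu, hLz, zero_add, smul_eq_zero] at h2
      have hk : Multiplicative.toAdd k = 0 := h2.resolve_right ha0
      rw [hk] at h
      simp at h
      have hk' : k = 1 := hk
      subst h hk'
      rfl
    · intro x
      obtain ⟨k, hk⟩ := (hmem (L x)).1 ⟨x, rfl⟩
      refine ⟨(⟨x * (g ^ k)⁻¹, ?_⟩, Multiplicative.ofAdd k), ?_⟩
      · rw [hker, hL, hLinv, hLz, hk, add_neg_cancel]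
      · rw [hΦ]; simp

lemma eigvec_aux (M : Matrix (Fin 3) (Fin 3) ℤ) (β : ℂ)
    (h : Polynomial.aeval β M.charpoly = 0) :
    ∃ v : Fin 3 → ℂ, v ≠ 0 ∧ (M.map (Int.castRingHom ℂ)).mulVec v = β • v := by
  have h1 : (Matrix.scalar (Fin 3) β - M.map (Int.castRingHom ℂ)).det = 0 := by
    rw [← Matrix.eval_charpoly, Matrix.charpoly_map, Polynomial.eval_map]
    simpa [Polynomial.aeval_def] using h
  obtain ⟨v, hv, hv2⟩ := Matrix.exists_mulVec_eq_zero_iff.2 h1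
  refine ⟨v, hv, ?_⟩
  rw [Matrix.sub_mulVec, sub_eq_zero] at hv2
  rw [← hv2]
  simp [Matrix.scalar_apply, Matrix.diagonal_const_mulVec]

lemma star_mulVec_aux (N : Matrix (Fin 3) (Fin 3) ℤ) (μ : ℂ) (w : Fin 3 → ℂ)
    (h : (N.map (Int.castRingHom ℂ)).mulVec w = μ • w) :
    (N.map (Int.castRingHom ℂ)).mulVec (star w) = (starRingEnd ℂ μ) • (star w) := by
  ext i
  have := congrArg (starRingEnd ℂ) (congrFun h i)
  simpa [Matrix.mulVec, dotProduct] using this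

set_option maxHeartbeats 2000000 in
theorem centralizer_GL3_iso_finite_prod_int
    (M : GL (Fin 3) ℤ)
    (α : ℝ) (hα1 : α ≠ 1) (hα2 : α ≠ -1)
    (hαroot : Polynomial.aeval α (Matrix.charpoly (M : Matrix (Fin 3) (Fin 3) ℤ)) = 0)
    (β : ℂ) (hβroot : Polynomial.aeval β (Matrix.charpoly (M : Matrix (Fin 3) (Fin 3) ℤ)) = 0)
    (hβ : β ≠ (starRingEnd ℂ) β) :
    ∃ (U : Type) (_ : Group U) (_ : Finite U),
      Nonempty ((Subgroup.centralizer ({M} : Set (GL (Fin 3) ℤ))) ≃* U × Multiplicative ℤ) := by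
  have hαroot' : Polynomial.aeval (α : ℂ) (Matrix.charpoly (M : Matrix (Fin 3) (Fin 3) ℤ)) = 0 := by
    have := congrArg (algebraMap ℝ ℂ) hαroot
    rw [← Polynomial.aeval_algebraMap_apply] at this
    simpa using this
  obtain ⟨v, hv0, hv⟩ := eigvec_aux _ _ hαroot'
  obtain ⟨w, hw0, hw⟩ := eigvec_aux _ _ hβroot
  have hw' := star_mulVec_aux _ _ _ hw
  have hw0' : star w ≠ 0 := by simpa using hw0
  let J : GL (Fin 3) ℤ → Matrix (Fin 3) (Fin 3) ℂ :=
    fun N => (N : Matrix (Fin 3) (Fin 3) ℤ).map (Int.castRingHom ℂ)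
  have hJmul : ∀ A B, J (A * B) = J A * J B := fun A B => by
    simp only [J, Units.val_mul, Matrix.map_mul]
  have hJinj : Function.Injective J := fun A B h => by
    apply Units.ext
    ext i j
    have := congrFun (congrFun h i) j
    simpa [J] using this
  let e : Fin 3 → ℂ := ![(α : ℂ), β, starRingEnd ℂ β]
  let q : Fin 3 → (Fin 3 → ℂ) := ![v, w, star w]
  have hαβ : (α : ℂ) ≠ β := by
    rintro h; apply hβ; rw [← h]; simp
  have hαβ' : (α : ℂ) ≠ starRingEnd ℂ β := by
    rintro h; apply hβ
    have := congrArg (starRingEnd ℂ) h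
    simp at this
    rw [← this]; simp
  have heinj : Function.Injective e := by
    intro i j h
    fin_cases i <;> fin_cases j <;> simp [e] at h ⊢ <;>
      first | exact hαβ h | exact hαβ' h | exact hαβ h.symm | exact hαβ' h.symm | exact hβ h | exact hβ h.symm
  have hq : ∀ i, (J M).mulVec (q i) = e i • q i := by
    intro i; fin_cases i
    · exact hv
    · exact hw
    · exact hw'
  have hq0 : ∀ i, q i ≠ 0 := by
    intro i; fin_cases i
    · exact hv0
    · exact hw0
    · exact hw0'
  have hli : LinearIndependent ℂ q := by
    apply Module.End.eigenvectors_linearIndependent' (Matrix.toLin' (J M)) e heinj q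
    intro i
    rw [Module.End.hasEigenvector_iff, Module.End.mem_eigenspace_iff]
    exact ⟨by rw [Matrix.toLin'_apply]; exact hq i, hq0 i⟩
  let P : Matrix (Fin 3) (Fin 3) ℂ := (Matrix.of q).transpose
  have hPu : IsUnit P := by
    rw [← Matrix.linearIndependent_cols_iff_isUnit]
    exact hli
  have hPdet : IsUnit P.det := (Matrix.isUnit_iff_isUnit_det P).1 hPu
  have hPP : P * P⁻¹ = 1 := Matrix.mul_nonsing_inv P hPdet
  have hPP' : P⁻¹ * P = 1 := Matrix.nonsing_inv_mul P hPdet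
  let C : GL (Fin 3) ℤ → Matrix (Fin 3) (Fin 3) ℂ := fun N => P⁻¹ * J N * P
  have hCJ : ∀ N, J N = P * C N * P⁻¹ := fun N => by
    simp only [C]
    calc J N = (P * P⁻¹) * J N * (P * P⁻¹) := by rw [hPP]; simp
      _ = _ := by simp only [Matrix.mul_assoc]
  have hPC : ∀ N, J N * P = P * C N := fun N => by
    rw [hCJ N, Matrix.mul_assoc, hPP', Matrix.mul_one]
  have hCmul : ∀ A B, C (A * B) = C A * C B := fun A B => by
    simp only [C, hJmul]
    calc P⁻¹ * (J A * J B) * P = P⁻¹ * J A * 1 * J B * P := by simp [Matrix.mul_assoc]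
      _ = _ := by rw [← hPP]; simp only [Matrix.mul_assoc]
  have hCM : C M = Matrix.diagonal e := by
    have : J M * P = P * Matrix.diagonal e := by
      ext i j
      have := congrFun (hq j) i
      rw [Matrix.mul_diagonal]
      simp only [Pi.smul_apply, smul_eq_mul] at this
      rw [mul_comm]
      exact this
    simp only [C]
    rw [Matrix.mul_assoc, this, ← Matrix.mul_assoc, hPP', Matrix.one_mul]
  have hCdiag : ∀ N ∈ Subgroup.centralizer ({M} : Set (GL (Fin 3) ℤ)),
      C N = Matrix.diagonal (fun i => C N i i) := by
    intro N hN
    have hc : M * N = N * M := (Subgroup.mem_centralizer_iff.1 hN) M rfl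
    have h1 : C M * C N = C N * C M := by rw [← hCmul, hc, hCmul]
    rw [hCM] at h1
    ext i j
    by_cases hij : i = j
    · subst hij; simp
    · rw [Matrix.diagonal_apply_ne _ hij]
      have := congrFun (congrFun h1 i) j
      rw [Matrix.diagonal_mul, Matrix.mul_diagonal, mul_comm] at this
      have h2 : C N i j * (e i - e j) = 0 := by rw [mul_sub, this, sub_self]
      exact (mul_eq_zero.1 h2).resolve_right (sub_ne_zero.2 fun h => hij (heinj h))
  have hCeig : ∀ N ∈ Subgroup.centralizer ({M} : Set (GL (Fin 3) ℤ)), ∀ i,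
      (J N).mulVec (q i) = C N i i • q i := by
    intro N hN i
    ext k
    have := congrFun (congrFun (hPC N) k) i
    rw [hCdiag N hN, Matrix.mul_diagonal, mul_comm (P k i)] at this
    exact this
  have hconj : ∀ N ∈ Subgroup.centralizer ({M} : Set (GL (Fin 3) ℤ)),
      C N 2 2 = starRingEnd ℂ (C N 1 1) := by
    intro N hN
    have h1 := star_mulVec_aux _ _ _ (hCeig N hN 1)
    have h2 := hCeig N hN 2
    have h3 : C N 2 2 • star w = starRingEnd ℂ (C N 1 1) • star w := h2.symm.trans h1
    exact smul_left_injective ℂ hw0' h3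
  have hdet : ∀ N, ‖(C N).det‖ = 1 := by
    intro N
    have h1 : (C N).det = (J N).det := by
      simp only [C]
      rw [Matrix.det_mul_right_comm, hPP', Matrix.one_mul]
    have h2 : (J N).det = (((N : Matrix (Fin 3) (Fin 3) ℤ).det : ℤ) : ℂ) := by
      simp only [J]
      rw [← RingHom.mapMatrix_apply, ← RingHom.map_det]; simp
    have h3 : IsUnit (N : Matrix (Fin 3) (Fin 3) ℤ).det :=
      (Matrix.isUnit_iff_isUnit_det _).1 N.isUnit
    rw [h1, h2]
    rcases Int.isUnit_iff.1 h3 with h | h <;> simp [h]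
  have hnorm : ∀ N ∈ Subgroup.centralizer ({M} : Set (GL (Fin 3) ℤ)),
      ‖C N 0 0‖ * ‖C N 1 1‖ ^ 2 = 1 := by
    intro N hN
    have := hdet N
    rw [hCdiag N hN, Matrix.det_diagonal, Fin.prod_univ_three, hconj N hN] at this
    simp only [norm_mul, RCLike.norm_conj] at this
    rw [← this]; ring
  have hne : ∀ N ∈ Subgroup.centralizer ({M} : Set (GL (Fin 3) ℤ)), ‖C N 0 0‖ ≠ 0 := by
    intro N hN h
    have := hnorm N hN
    rw [h] at this; simp at this
  have hCmul0 : ∀ A ∈ Subgroup.centralizer ({M} : Set (GL (Fin 3) ℤ)), ∀ B,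
      C (A * B) 0 0 = C A 0 0 * C B 0 0 := by
    intro A hA B
    rw [hCmul, hCdiag A hA, Matrix.diagonal_mul]; simp
  have hMmem : M ∈ Subgroup.centralizer ({M} : Set (GL (Fin 3) ℤ)) := by
    rw [Subgroup.mem_centralizer_iff]; rintro _ rfl; rfl
  refine split_aux (G := Subgroup.centralizer ({M} : Set (GL (Fin 3) ℤ))) ?_
    (fun N => Real.log ‖C N 0 0‖) ?_ ?_ ⟨M, hMmem⟩ ?_
  · rintro ⟨A, hA⟩ ⟨B, hB⟩
    apply Subtype.ext
    apply hJinj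
    show J (A * B) = J (B * A)
    rw [hCJ (A * B), hCJ (B * A), hCmul, hCmul, hCdiag A hA, hCdiag B hB,
      Matrix.diagonal_mul_diagonal, Matrix.diagonal_mul_diagonal]
    simp only [mul_comm]
  · rintro ⟨A, hA⟩ ⟨B, hB⟩
    show Real.log ‖C (A * B) 0 0‖ = _
    rw [hCmul0 A hA, norm_mul, Real.log_mul (hne A hA) (hne B hB)]
  · obtain ⟨K, hK⟩ : ∃ K : ℤ, ∀ i j, ∑ k, ‖P i k‖ * Real.exp 1 * ‖P⁻¹ k j‖ ≤ K := by
      obtain ⟨K, hK⟩ := (Set.finite_range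
        (fun p : Fin 3 × Fin 3 => ∑ k, ‖P p.1 k‖ * Real.exp 1 * ‖P⁻¹ k p.2‖)).bddAbove
      exact ⟨⌈K⌉, fun i j => (hK ⟨(i, j), rfl⟩).trans (Int.le_ceil K)⟩
    have hfinM : {A : Fin 3 → Fin 3 → ℤ | ∀ i j, A i j ∈ Set.Icc (-K) K}.Finite := by
      have := Set.Finite.pi' (fun _ : Fin 3 =>
        Set.Finite.pi' (fun _ : Fin 3 => Set.finite_Icc (-K) K))
      exact this
    refine Set.Finite.of_finite_image (f := fun N => ((N : GL (Fin 3) ℤ) : Matrix (Fin 3) (Fin 3) ℤ))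
      (hfinM.subset ?_) (fun a _ b _ h => Subtype.ext (Units.ext h))
    rintro _ ⟨⟨N, hN⟩, hb, rfl⟩ i j
    have hb' : |Real.log ‖C N 0 0‖| ≤ 1 := hb
    have hpos : 0 < ‖C N 0 0‖ := lt_of_le_of_ne (norm_nonneg _) (hne N hN).symm
    obtain ⟨hlo, hhi⟩ := abs_le.1 hb'
    have he1 : (1 : ℝ) ≤ Real.exp 1 := Real.one_le_exp zero_le_one
    have hb0 : ‖C N 0 0‖ ≤ Real.exp 1 := (Real.log_le_iff_le_exp hpos).1 hhi
    have hb0' : Real.exp (-1) ≤ ‖C N 0 0‖ := (Real.le_log_iff_exp_le hpos).1 hlo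
    have hb1 : ‖C N 1 1‖ ≤ Real.exp 1 := by
      have h1 := hnorm N hN
      have h2 : Real.exp 1 * Real.exp (-1) = 1 := by rw [← Real.exp_add]; simp
      have h3 : ‖C N 1 1‖ ^ 2 ≤ Real.exp 1 := by
        have : Real.exp (-1) * ‖C N 1 1‖ ^ 2 ≤ 1 := by
          refine le_of_le_of_eq ?_ h1
          exact mul_le_mul_of_nonneg_right hb0' (sq_nonneg _)
        calc ‖C N 1 1‖ ^ 2 = Real.exp 1 * (Real.exp (-1) * ‖C N 1 1‖ ^ 2) := by
              rw [← mul_assoc, h2, one_mul]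
          _ ≤ Real.exp 1 * 1 := by gcongr
          _ = _ := mul_one _
      nlinarith [norm_nonneg (C N 1 1)]
    have hbk : ∀ k, ‖C N k k‖ ≤ Real.exp 1 := by
      intro k; fin_cases k
      · exact hb0
      · exact hb1
      · show ‖C N 2 2‖ ≤ _
        rw [hconj N hN, RCLike.norm_conj]; exact hb1
    have hent : ‖J N i j‖ ≤ K := by
      refine le_trans ?_ (hK i j)
      rw [hCJ N, hCdiag N hN, Matrix.mul_apply]
      refine (norm_sum_le _ _).trans (Finset.sum_le_sum fun k _ => ?_)
      rw [Matrix.mul_diagonal, norm_mul, norm_mul]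
      gcongr
      exact hbk k
    have h5 : ((|(N : Matrix (Fin 3) (Fin 3) ℤ) i j| : ℤ) : ℝ) ≤ K := by
      rw [Int.cast_abs]
      simpa [J] using hent
    exact Set.mem_Icc.2 (abs_le.1 (by exact_mod_cast h5))
  · show Real.log ‖C M 0 0‖ ≠ 0
    have h1 := hne M hMmem
    have h2 : C M 0 0 = (α : ℂ) := by rw [hCM]; simp [e]
    rw [h2] at h1 ⊢
    rw [Complex.norm_real, Real.norm_eq_abs] at h1 ⊢
    intro h
    rcases Real.log_eq_zero.1 h with h | h | h
    · exact h1 h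
    · rcases eq_or_eq_neg_of_abs_eq h with h | h
      · exact hα1 h
      · exact hα2 h
    · linarith [abs_nonneg α]
end

section
/- Let M ∈ GL₃(ℤ) (a 3×3 integer matrix with determinant ±1) have a real eigenvalue α with α ≠ 1 and α ≠ -1, and a nonreal complex eigenvalue β, and let Γ be the centralizer of M in GL₃(ℤ). Then the cyclic subgroup M^ℤ = {M^k : k ∈ ℤ} generated by M has finite index in Γ; equivalently, since Γ is abelian, the quotient group Γ/M^ℤ is finite. -/
open Matrix in
lemma exists_diag_aux (A : Matrix (Fin 3) (Fin 3) ℂ)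
    (hA : ∀ i j, (starRingEnd ℂ) (A i j) = A i j) (D : Fin 3 → ℂ) (hD : Function.Injective D)
    (hD2 : D 2 = (starRingEnd ℂ) (D 1))
    (hr : ∀ i, A.charpoly.IsRoot (D i)) :
    ∃ P Q : Matrix (Fin 3) (Fin 3) ℂ, P * Q = 1 ∧ Q * P = 1 ∧ A * P = P * Matrix.diagonal D ∧
      ∀ i, P i 2 = (starRingEnd ℂ) (P i 1) := by
  have hex : ∀ i, ∃ v : Fin 3 → ℂ, v ≠ 0 ∧ A *ᵥ v = D i • v := by
    intro i
    have h1 : (A - Matrix.scalar (Fin 3) (D i)).det = 0 := by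
      have h := hr i
      rw [Polynomial.IsRoot.def, Matrix.eval_charpoly] at h
      rw [← neg_sub, Matrix.det_neg, h, mul_zero]
    obtain ⟨v, hv, hv2⟩ := Matrix.exists_mulVec_eq_zero_iff.mpr h1
    refine ⟨v, hv, ?_⟩
    rw [Matrix.sub_mulVec, sub_eq_zero] at hv2
    rw [hv2]
    ext j
    simp [Matrix.mulVec_diagonal]
  choose w hw0 hw using hex
  let c : Fin 3 → ℂ := fun i => (starRingEnd ℂ) (w 1 i)
  have hc : A *ᵥ c = D 2 • c := by
    ext i
    have h := congrArg (starRingEnd ℂ) (congrFun (hw 1) i)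
    simp only [Matrix.mulVec, dotProduct, map_sum, map_mul, hA, Pi.smul_apply, smul_eq_mul] at h ⊢
    rw [hD2]
    exact h
  have hc0 : c ≠ 0 := by
    intro h
    apply hw0 1
    ext i
    have := congrFun h i
    simpa [c] using this
  let v : Fin 3 → Fin 3 → ℂ := ![w 0, w 1, c]
  have hv : ∀ i, A *ᵥ v i = D i • v i := by
    intro i
    fin_cases i
    · exact hw 0
    · exact hw 1
    · exact hc
  have hv0 : ∀ i, v i ≠ 0 := by
    intro i
    fin_cases i
    · exact hw0 0
    · exact hw0 1
    · exact hc0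
  have hli : LinearIndependent ℂ v := by
    apply Module.End.eigenvectors_linearIndependent' (Matrix.toLin' A) D hD v
    intro i
    rw [Module.End.hasEigenvector_iff, Module.End.mem_eigenspace_iff]
    exact ⟨by simpa using hv i, hv0 i⟩
  let P : Matrix (Fin 3) (Fin 3) ℂ := (Matrix.of v)ᵀ
  have hu : IsUnit P := by
    rw [← Matrix.linearIndependent_cols_iff_isUnit]
    exact hli
  obtain ⟨U, hU⟩ := hu
  refine ⟨P, (U⁻¹ : (Matrix (Fin 3) (Fin 3) ℂ)ˣ), by rw [← hU]; simp, by rw [← hU]; simp, ?_, ?_⟩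
  · ext i j
    rw [Matrix.mul_diagonal]
    have := congrFun (hv j) i
    simp only [Matrix.mulVec, dotProduct, Pi.smul_apply, smul_eq_mul] at this
    rw [Matrix.mul_apply]
    simp only [P, Matrix.transpose_apply, Matrix.of_apply]
    rw [this, mul_comm]
  · intro i
    rfl

lemma comm_diag_aux (A B P Q : Matrix (Fin 3) (Fin 3) ℂ) (D : Fin 3 → ℂ)
    (hD : Function.Injective D) (hPQ : P * Q = 1) (hQP : Q * P = 1)
    (hAP : A * P = P * Matrix.diagonal D) (hP : ∀ i, P i 2 = (starRingEnd ℂ) (P i 1))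
    (hB : ∀ i j, (starRingEnd ℂ) (B i j) = B i j) (hAB : A * B = B * A) :
    ∃ d : Fin 3 → ℂ, Q * B * P = Matrix.diagonal d ∧ d 2 = (starRingEnd ℂ) (d 1) := by
  have hX : Matrix.diagonal D * (Q * B * P) = (Q * B * P) * Matrix.diagonal D := by
    have hQA : Q * A = Matrix.diagonal D * Q := by
      calc Q * A = Q * A * (P * Q) := by rw [hPQ, mul_one]
        _ = Q * (A * P) * Q := by simp only [mul_assoc]
        _ = (Q * P) * Matrix.diagonal D * Q := by rw [hAP]; simp only [mul_assoc]
        _ = _ := by rw [hQP, one_mul]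
    calc _ = (Matrix.diagonal D * Q) * B * P := by simp only [mul_assoc]
      _ = Q * (A * B) * P := by rw [← hQA]; simp only [mul_assoc]
      _ = Q * B * (A * P) := by rw [hAB]; simp only [mul_assoc]
      _ = _ := by rw [hAP]; simp only [mul_assoc]
  have hd : Q * B * P = Matrix.diagonal (fun i => (Q * B * P) i i) := by
    ext i j
    by_cases h : i = j
    · subst h; simp
    · rw [Matrix.diagonal_apply_ne _ h]
      have h2 := congrFun (congrFun hX i) j
      rw [Matrix.diagonal_mul, Matrix.mul_diagonal, mul_comm] at h2
      have h3 : (Q * B * P) i j * (D i - D j) = 0 := by rw [mul_sub, h2, sub_self]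
      rcases mul_eq_zero.mp h3 with h4 | h4
      · exact h4
      · exact absurd (hD (sub_eq_zero.mp h4)) h
  refine ⟨_, hd, ?_⟩
  set d : Fin 3 → ℂ := fun i => (Q * B * P) i i with hdd
  have hBP : B * P = P * Matrix.diagonal d := by
    rw [← hd, ← mul_assoc, ← mul_assoc, hPQ, one_mul]
  have hne : ∃ i, P i 2 ≠ 0 := by
    by_contra! h
    have h2 := congrFun (congrFun hQP 2) 2
    rw [Matrix.mul_apply] at h2
    simp [h] at h2
  obtain ⟨i, hi⟩ := hne
  have e1 := congrFun (congrFun hBP i) 1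
  have e2 := congrFun (congrFun hBP i) 2
  rw [Matrix.mul_diagonal, Matrix.mul_apply] at e1 e2
  have e3 := congrArg (starRingEnd ℂ) e1
  simp only [map_sum, map_mul, hB, ← hP] at e3
  exact mul_left_cancel₀ hi (e2.symm.trans e3)

lemma finite_quot_aux {G : Type*} [Group G] (f : G →* ℝ) (g : G) (hpos : ∀ x, 0 < f x)
    (hg : f g ≠ 1) (hfin : ∀ C, {x | 1 ≤ f x ∧ f x ≤ C}.Finite) :
    Finite (G ⧸ Subgroup.zpowers g) := by
  have key : ∀ h : G, Subgroup.zpowers h = Subgroup.zpowers g → 1 < f h →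
      Finite (G ⧸ Subgroup.zpowers g) := by
    intro h hh h1
    have : Finite {x | 1 ≤ f x ∧ f x ≤ f h} := hfin (f h)
    refine Finite.of_surjective
      (fun x : {x | 1 ≤ f x ∧ f x ≤ f h} => (QuotientGroup.mk x.1 : G ⧸ Subgroup.zpowers g)) ?_
    intro q
    obtain ⟨x, rfl⟩ := QuotientGroup.mk_surjective q
    obtain ⟨n, hn1, hn2⟩ := exists_mem_Ico_zpow (hpos x) h1
    have hz : ∀ m : ℤ, f (h ^ m) = f h ^ m := fun m => by
      have := map_zpow f.toHomUnits h m
      have := congrArg Units.val this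
      simpa using this
    have hv : f (x * h ^ (-n)) = f x / f h ^ n := by
      rw [map_mul, hz, zpow_neg, div_eq_mul_inv]
    have hp : 0 < f h ^ n := zpow_pos (hpos h) n
    refine ⟨⟨x * h ^ (-n), ?_, ?_⟩, ?_⟩
    · rw [hv, le_div_iff₀ hp, one_mul]; exact hn1
    · rw [hv, div_le_iff₀ hp]
      rw [zpow_add_one₀ (hpos h).ne'] at hn2
      linarith
    · rw [QuotientGroup.eq, ← hh]
      have : (x * h ^ (-n))⁻¹ * x = h ^ n := by group
      rw [this]
      exact Subgroup.zpow_mem_zpowers h n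
  rcases lt_or_gt_of_ne hg with h | h
  · apply key g⁻¹ (Subgroup.zpowers_inv)
    have h2 : f g⁻¹ * f g = 1 := by rw [← map_mul]; simp
    by_contra! h3
    nlinarith [hpos g, hpos g⁻¹]
  · exact key g rfl h

lemma finite_bdd_aux (P Q : Matrix (Fin 3) (Fin 3) ℂ) (C : ℝ) :
    {N : GL (Fin 3) ℤ | ∃ d : Fin 3 → ℂ, (∀ i, ‖d i‖ ≤ C) ∧
      (N : Matrix (Fin 3) (Fin 3) ℤ).map (Int.castRingHom ℂ)
        = P * Matrix.diagonal d * Q}.Finite := by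
  let B : Fin 3 → Fin 3 → ℝ := fun i j => ∑ k, ‖P i k‖ * C * ‖Q k j‖
  have hS : {X : Matrix (Fin 3) (Fin 3) ℤ | ∀ i, X i ∈ {r : Fin 3 → ℤ | ∀ j, r j ∈
      Set.Icc (-⌈B i j⌉) ⌈B i j⌉}}.Finite :=
    Set.Finite.pi' fun i => Set.Finite.pi' fun j => Set.finite_Icc _ _
  refine (hS.preimage (f := fun N : GL (Fin 3) ℤ => (N : Matrix (Fin 3) (Fin 3) ℤ))
    (Units.val_injective.injOn)).subset ?_
  rintro N ⟨d, hd, hN⟩ i j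
  have h := congrFun (congrFun hN i) j
  rw [Matrix.mul_apply] at h
  simp only [Matrix.mul_diagonal, Matrix.map_apply, Int.coe_castRingHom] at h
  have hb : |((N : Matrix (Fin 3) (Fin 3) ℤ) i j : ℝ)| ≤ B i j := by
    rw [← Complex.norm_intCast, h]
    refine (norm_sum_le _ _).trans (Finset.sum_le_sum fun k _ => ?_)
    rw [norm_mul, norm_mul]
    gcongr
    exact hd k
  have hb2 := hb.trans (Int.le_ceil _)
  rw [abs_le] at hb2
  exact ⟨by exact_mod_cast hb2.1, by exact_mod_cast hb2.2⟩


/-- Let `M ∈ GL₃(ℤ)` have a real eigenvalue `α ≠ ±1` and a nonreal complex eigenvalue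
`β`, and let `Γ` be the centralizer of `M` in `GL₃(ℤ)`. Then the cyclic subgroup
generated by `M` has finite index in `Γ`, i.e. the quotient `Γ / M^ℤ` is finite. -/
theorem centralizer_GL3_quotient_zpowers_finite
    (M : GL (Fin 3) ℤ)
    (α : ℝ) (hα1 : α ≠ 1) (hα2 : α ≠ -1)
    (hαroot : Polynomial.aeval α (Matrix.charpoly (M : Matrix (Fin 3) (Fin 3) ℤ)) = 0)
    (β : ℂ) (hβroot : Polynomial.aeval β (Matrix.charpoly (M : Matrix (Fin 3) (Fin 3) ℤ)) = 0)
    (hβ : β ≠ (starRingEnd ℂ) β)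
    (hM : M ∈ Subgroup.centralizer ({M} : Set (GL (Fin 3) ℤ))) :
    Finite ((Subgroup.centralizer ({M} : Set (GL (Fin 3) ℤ))) ⧸
      Subgroup.zpowers (⟨M, hM⟩ : Subgroup.centralizer ({M} : Set (GL (Fin 3) ℤ)))) := by
  classical
  let c : Matrix (Fin 3) (Fin 3) ℤ →+* Matrix (Fin 3) (Fin 3) ℂ :=
    (Int.castRingHom ℂ).mapMatrix
  have hcr : ∀ X i j, (starRingEnd ℂ) (c X i j) = c X i j := by
    intro X i j
    simp [c]
  let D : Fin 3 → ℂ := ![(α : ℂ), β, (starRingEnd ℂ) β]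
  have hαr : (starRingEnd ℂ) (α : ℂ) = α := Complex.conj_ofReal α
  have hD : Function.Injective D := by
    have h1 : (α : ℂ) ≠ β := by
      rintro rfl
      exact hβ hαr.symm
    have h2 : (α : ℂ) ≠ (starRingEnd ℂ) β := by
      intro h
      have h3 := congrArg (starRingEnd ℂ) h
      rw [hαr, Complex.conj_conj] at h3
      exact h1 h3
    intro i j hij
    fin_cases i <;> fin_cases j <;> simp [D] at hij ⊢ <;>
      first
        | exact h1 hij
        | exact h2 hij
        | exact hβ hij
        | exact h1 hij.symm
        | exact h2 hij.symm
        | exact hβ hij.symm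
  have hch : (c M.val).charpoly = M.val.charpoly.map (Int.castRingHom ℂ) :=
    Matrix.charpoly_map _ _
  have hroot : ∀ z : ℂ, Polynomial.aeval z M.val.charpoly = 0 → (c M.val).charpoly.IsRoot z := by
    intro z hz
    rw [Polynomial.IsRoot.def, hch, Polynomial.eval_map]
    exact hz
  have hr : ∀ i, (c M.val).charpoly.IsRoot (D i) := by
    intro i
    apply hroot
    fin_cases i
    · have := congrArg (Complex.ofRealHom) hαroot
      rw [Polynomial.aeval_def, Polynomial.hom_eval₂, map_zero] at this
      rw [Polynomial.aeval_def]
      convert this using 2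
      · exact RingHom.ext_int _ _
      · rfl
    · exact hβroot
    · have := congrArg (starRingEnd ℂ) hβroot
      rw [Polynomial.aeval_def, Polynomial.hom_eval₂, map_zero] at this
      rw [Polynomial.aeval_def]
      convert this using 2
      · exact RingHom.ext_int _ _
      · rfl
  obtain ⟨P, Q, hPQ, hQP, hAP, hP⟩ := exists_diag_aux (c M.val) (hcr _) D hD rfl hr
  have hdg : ∀ N : Subgroup.centralizer ({M} : Set (GL (Fin 3) ℤ)),
      ∃ d : Fin 3 → ℂ, Q * c N.1.val * P = Matrix.diagonal d ∧ d 2 = (starRingEnd ℂ) (d 1) := by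
    intro N
    refine comm_diag_aux (c M.val) _ P Q D hD hPQ hQP hAP hP (hcr _) ?_
    have h := Subgroup.mem_centralizer_singleton_iff.mp N.2
    have h2 := congrArg (fun X : GL (Fin 3) ℤ => c X.val) h
    simp only [Units.val_mul, map_mul] at h2
    first | exact h2 | exact h2.symm
  choose d hd hd2 using hdg
  have hinv : ∀ N, c N.1.val = P * Matrix.diagonal (d N) * Q := by
    intro N
    rw [← hd]
    calc _ = (P * Q) * c N.1.val * (P * Q) := by rw [hPQ, one_mul, mul_one]
      _ = _ := by simp only [mul_assoc]
  have hmul : ∀ N N', d (N * N') = d N * d N' := by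
    intro N N'
    apply Matrix.diagonal_injective
    rw [← hd]
    have : Matrix.diagonal (d N * d N') = Matrix.diagonal (d N) * Matrix.diagonal (d N') := by
      rw [Matrix.diagonal_mul_diagonal]; rfl
    rw [this, ← hd, ← hd]
    simp only [Subgroup.coe_mul, Units.val_mul, map_mul]
    calc _ = Q * c N.1.val * 1 * c N'.1.val * P := by simp only [mul_assoc, mul_one, one_mul]
      _ = _ := by rw [← hPQ]; simp only [mul_assoc]
  have hone : d 1 = 1 := by
    apply Matrix.diagonal_injective
    rw [← hd]
    simp [hQP]
  have hdM : d ⟨M, hM⟩ = D := by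
    apply Matrix.diagonal_injective
    rw [← hd]
    simp only
    rw [mul_assoc, hAP, ← mul_assoc, hQP, one_mul]
  have hdet : ∀ N, ‖d N 0‖ * ‖d N 1‖ ^ 2 = 1 := by
    intro N
    have h1 : (c N.1.val).det = d N 0 * d N 1 * d N 2 := by
      rw [hinv, Matrix.det_mul, Matrix.det_mul, Matrix.det_diagonal, Fin.prod_univ_three,
        mul_right_comm, ← Matrix.det_mul, hPQ, Matrix.det_one, one_mul]
    have h2 : (c N.1.val).det = ((N.1.val.det : ℤ) : ℂ) :=
      ((Int.castRingHom ℂ).map_det _).symm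
    have h3 : IsUnit N.1.val.det := (Matrix.isUnit_iff_isUnit_det _).mp N.1.isUnit
    have h4 : ‖((N.1.val.det : ℤ) : ℂ)‖ = 1 := by
      rcases Int.isUnit_iff.mp h3 with h | h <;> rw [h] <;> simp
    rw [← h2, h1, hd2, norm_mul, norm_mul, Complex.norm_conj] at h4
    rw [← h4]; ring
  let f : Subgroup.centralizer ({M} : Set (GL (Fin 3) ℤ)) →* ℝ :=
    { toFun := fun N => ‖d N 0‖
      map_one' := by rw [hone]; simp
      map_mul' := fun N N' => by rw [hmul]; simp }
  refine finite_quot_aux f _ ?_ ?_ ?_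
  · intro N
    change 0 < ‖d N 0‖
    rcases (norm_nonneg (d N 0)).eq_or_lt with h | h
    · have := hdet N
      rw [← h] at this
      simp at this
    · exact h
  · change ‖d _ 0‖ ≠ 1
    rw [hdM]
    change ‖(α : ℂ)‖ ≠ 1
    rw [Complex.norm_real, Real.norm_eq_abs]
    intro h
    rcases eq_or_eq_neg_of_abs_eq h with h | h
    · exact hα1 h
    · exact hα2 h
  · intro C
    refine ((finite_bdd_aux P Q (max C 1)).preimage
      (f := fun N : Subgroup.centralizer ({M} : Set (GL (Fin 3) ℤ)) => N.1)
      (Subtype.val_injective.injOn)).subset ?_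
    rintro N ⟨hN1, hN2⟩
    change 1 ≤ ‖d N 0‖ at hN1
    change ‖d N 0‖ ≤ C at hN2
    have h1 : ‖d N 1‖ ≤ 1 := by
      by_contra! h
      nlinarith [hdet N]
    refine ⟨d N, ?_, hinv N⟩
    intro i
    fin_cases i
    · exact le_max_of_le_left hN2
    · exact le_max_of_le_right h1
    · apply le_max_of_le_right
      change ‖d N 2‖ ≤ 1
      rw [hd2, Complex.norm_conj]
      exact h1
end

section
/- Let r be a nonzero integer, and let H(r) be the group given by the presentation with generators g₁, g₂, g₃ and relations g₃g₁ = g₁g₃, g₃g₂ = g₂g₃, and g₁⁻¹g₂⁻¹g₁g₂ = g₃ʳ. Then the center Z(H(r)) of H(r) equals the subgroup generated by (the image of) g₃, and this subgroup is infinite cyclic, i.e., isomorphic to ℤ. -/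
/-- The relations of the group `H(r)`: generators `g₁ = of 0`, `g₂ = of 1`, `g₃ = of 2`
subject to `g₃g₁ = g₁g₃`, `g₃g₂ = g₂g₃` and `g₁⁻¹g₂⁻¹g₁g₂ = g₃ʳ`. -/
def InoueHeisenbergRels (r : ℤ) : Set (FreeGroup (Fin 3)) :=
  { FreeGroup.of 2 * FreeGroup.of 0 * (FreeGroup.of 0 * FreeGroup.of 2)⁻¹,
    FreeGroup.of 2 * FreeGroup.of 1 * (FreeGroup.of 1 * FreeGroup.of 2)⁻¹,
    (FreeGroup.of 0)⁻¹ * (FreeGroup.of 1)⁻¹ * FreeGroup.of 0 * FreeGroup.of 1 *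
      ((FreeGroup.of 2) ^ r)⁻¹ }

/-- The model of `H(r)`: triples `(a, b, c)` standing for `g₁ᵃ g₂ᵇ g₃ᶜ`. -/
@[ext] structure InoueModel (r : ℤ) where
  a : ℤ
  b : ℤ
  c : ℤ

namespace InoueModel

variable {r : ℤ}

instance : Mul (InoueModel r) := ⟨fun x y => ⟨x.a + y.a, x.b + y.b, x.c + y.c - r * x.b * y.a⟩⟩
instance : One (InoueModel r) := ⟨⟨0, 0, 0⟩⟩
instance : Inv (InoueModel r) := ⟨fun x => ⟨-x.a, -x.b, -x.c - r * x.b * x.a⟩⟩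

@[simp] lemma mul_a (x y : InoueModel r) : (x * y).a = x.a + y.a := rfl
@[simp] lemma mul_b (x y : InoueModel r) : (x * y).b = x.b + y.b := rfl
@[simp] lemma mul_c (x y : InoueModel r) : (x * y).c = x.c + y.c - r * x.b * y.a := rfl
@[simp] lemma one_a : (1 : InoueModel r).a = 0 := rfl
@[simp] lemma one_b : (1 : InoueModel r).b = 0 := rfl
@[simp] lemma one_c : (1 : InoueModel r).c = 0 := rfl
@[simp] lemma inv_a (x : InoueModel r) : (x⁻¹).a = -x.a := rfl
@[simp] lemma inv_b (x : InoueModel r) : (x⁻¹).b = -x.b := rfl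
@[simp] lemma inv_c (x : InoueModel r) : (x⁻¹).c = -x.c - r * x.b * x.a := rfl

instance : Group (InoueModel r) :=
  Group.ofLeftAxioms
    (by intro x y z; ext <;> simp <;> ring)
    (by intro x; ext <;> simp)
    (by intro x; ext <;> simp <;> ring)

/-- The powers of `g₃` in the model. -/
def zHom (r : ℤ) : Multiplicative ℤ →* InoueModel r where
  toFun n := ⟨0, 0, n.toAdd⟩
  map_one' := rfl
  map_mul' x y := by ext <;> simp

lemma z_zpow (n : ℤ) : (⟨0, 0, 1⟩ : InoueModel r) ^ n = ⟨0, 0, n⟩ := by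
  have h := map_zpow (zHom r) (Multiplicative.ofAdd 1) n
  rw [← ofAdd_zsmul] at h
  simpa [zHom] using h.symm

/-- The generators of the model. -/
def gen (r : ℤ) : Fin 3 → InoueModel r := ![⟨1, 0, 0⟩, ⟨0, 1, 0⟩, ⟨0, 0, 1⟩]

lemma gen_rels (r : ℤ) : ∀ w ∈ InoueHeisenbergRels r, FreeGroup.lift (gen r) w = 1 := by
  intro w hw
  rcases hw with rfl | rfl | rfl
  · ext <;> simp [gen]
  · ext <;> simp [gen]
  · ext <;> simp [gen, z_zpow]

/-- The map from `H(r)` to the model. -/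
def phi (r : ℤ) : PresentedGroup (InoueHeisenbergRels r) →* InoueModel r :=
  PresentedGroup.toGroup (gen_rels r)

lemma phi_of (i : Fin 3) : phi r (PresentedGroup.of i) = gen r i :=
  PresentedGroup.toGroup.of (gen_rels r)

lemma swap_zpow {G : Type*} [Group G] {x y w : G} (h : y * x = x * w * y)
    (hx : Commute w x) (hy : Commute w y) (a b : ℤ) :
    y ^ b * x ^ a = x ^ a * y ^ b * w ^ (b * a) := by
  have h1 : SemiconjBy x (w * y) y := by
    rw [SemiconjBy, h, mul_assoc]
  have h2 := h1.zpow_right b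
  rw [hy.mul_zpow] at h2
  have h3 : SemiconjBy (y ^ b) x (x * w ^ b) := by
    rw [SemiconjBy, ← h2.eq, mul_assoc]
  have h4 := (h3.zpow_right a).eq
  rw [(hx.symm.zpow_right b).mul_zpow, ← zpow_mul] at h4
  rw [h4, mul_assoc, mul_assoc, ((hy.zpow_zpow (b * a) b)).eq]

lemma rel_eq {u v : FreeGroup (Fin 3)} (h : u * v⁻¹ ∈ InoueHeisenbergRels r) :
    PresentedGroup.mk (InoueHeisenbergRels r) u = PresentedGroup.mk (InoueHeisenbergRels r) v := by
  have := PresentedGroup.one_of_mem h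
  rwa [map_mul, map_inv, mul_inv_eq_one] at this

/-- The generators of `H(r)`. -/
abbrev g (r : ℤ) (i : Fin 3) : PresentedGroup (InoueHeisenbergRels r) := PresentedGroup.of i

lemma comm0 : Commute (g r 2) (g r 0) := by
  have := rel_eq (r := r) (u := FreeGroup.of 2 * FreeGroup.of 0)
    (v := FreeGroup.of 0 * FreeGroup.of 2) (Or.inl rfl)
  simp only [map_mul] at this
  exact this

lemma comm1 : Commute (g r 2) (g r 1) := by
  have := rel_eq (r := r) (u := FreeGroup.of 2 * FreeGroup.of 1)
    (v := FreeGroup.of 1 * FreeGroup.of 2) (Or.inr (Or.inl rfl))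
  simp only [map_mul] at this
  exact this

lemma rel3 : (g r 0)⁻¹ * (g r 1)⁻¹ * g r 0 * g r 1 = g r 2 ^ r := by
  have := rel_eq (r := r)
    (u := (FreeGroup.of 0)⁻¹ * (FreeGroup.of 1)⁻¹ * FreeGroup.of 0 * FreeGroup.of 1)
    (v := FreeGroup.of 2 ^ r) (Or.inr (Or.inr rfl))
  simp only [map_mul, map_inv, map_zpow] at this
  exact this

lemma swap : g r 1 * g r 0 = g r 0 * g r 2 ^ (-r) * g r 1 := by
  have h : g r 0 * g r 1 = g r 1 * g r 0 * g r 2 ^ r := by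
    rw [← rel3]; group
  have c0 := (comm0 (r := r)).zpow_left (-r)
  have c1 := (comm1 (r := r)).zpow_left (-r)
  rw [mul_assoc, c1.eq, ← mul_assoc, h, zpow_neg, mul_inv_cancel_right]

/-- The inverse map, from the model to `H(r)`. -/
def psi (r : ℤ) : InoueModel r →* PresentedGroup (InoueHeisenbergRels r) :=
  MonoidHom.mk' (fun x => g r 0 ^ x.a * g r 1 ^ x.b * g r 2 ^ x.c) (by
    intro x y
    have hs := swap_zpow (swap (r := r)) (comm0.zpow_left _) (comm1.zpow_left _) y.a x.b
    rw [← zpow_mul] at hs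
    have c0 := (comm0 (r := r)).zpow_zpow x.c y.a
    have c1 := (comm1 (r := r)).zpow_zpow (-r * (x.b * y.a) + x.c) y.b
    simp only [mul_a, mul_b, mul_c]
    calc _ = g r 0 ^ x.a * (g r 0 ^ y.a * g r 1 ^ x.b) *
          (g r 1 ^ y.b * g r 2 ^ (-r * (x.b * y.a) + x.c)) * g r 2 ^ y.c := by
            rw [show x.c + y.c - r * x.b * y.a = (-r * (x.b * y.a) + x.c) + y.c by ring]
            simp only [zpow_add, mul_assoc]
      _ = g r 0 ^ x.a * (g r 0 ^ y.a * g r 1 ^ x.b * g r 2 ^ (-r * (x.b * y.a))) * g r 2 ^ x.c *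
          g r 1 ^ y.b * g r 2 ^ y.c := by
            rw [← c1.eq]; simp only [zpow_add, mul_assoc]
      _ = g r 0 ^ x.a * g r 1 ^ x.b * (g r 0 ^ y.a * g r 2 ^ x.c) *
          g r 1 ^ y.b * g r 2 ^ y.c := by
            rw [← hs]; simp only [mul_assoc]
      _ = _ := by rw [← c0.eq]; simp only [mul_assoc])

lemma psi_apply (x : InoueModel r) : psi r x = g r 0 ^ x.a * g r 1 ^ x.b * g r 2 ^ x.c := rfl

lemma psi_phi (x : PresentedGroup (InoueHeisenbergRels r)) : psi r (phi r x) = x := by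
  have : (psi r).comp (phi r) = MonoidHom.id _ := by
    apply PresentedGroup.ext
    intro i
    rw [MonoidHom.comp_apply, phi_of, psi_apply]
    fin_cases i <;> simp [gen]
  exact DFunLike.congr_fun this x

end InoueModel

/-- For `r ≠ 0`, the center of `H(r)` is the subgroup generated by `g₃`, and this
subgroup is infinite cyclic, i.e. isomorphic to `ℤ`. -/
theorem center_InoueHeisenberg_eq_zpowers_g3 (r : ℤ) (hr : r ≠ 0) :
    Subgroup.center (PresentedGroup (InoueHeisenbergRels r)) =
      Subgroup.zpowers (PresentedGroup.of (2 : Fin 3)) ∧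
    Nonempty ((Subgroup.zpowers
        (PresentedGroup.of (2 : Fin 3) : PresentedGroup (InoueHeisenbergRels r)))
      ≃* Multiplicative ℤ) := by
  constructor
  · apply le_antisymm
    · intro x hx
      rw [Subgroup.mem_center_iff] at hx
      have h0 := congrArg (InoueModel.phi r) (hx (PresentedGroup.of 0))
      have h1 := congrArg (InoueModel.phi r) (hx (PresentedGroup.of 1))
      rw [map_mul, map_mul, InoueModel.phi_of] at h0 h1
      have h0' := congrArg InoueModel.c h0
      have h1' := congrArg InoueModel.c h1
      simp [InoueModel.gen, hr] at h0' h1'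
      have hb : (InoueModel.phi r x).b = 0 := by
        have : r * (InoueModel.phi r x).b = 0 := by linarith
        exact (mul_eq_zero.mp this).resolve_left hr
      rw [← InoueModel.psi_phi x, InoueModel.psi_apply, hb, h1']
      exact ⟨(InoueModel.phi r x).c, by simp⟩
    · rw [Subgroup.zpowers_le, Subgroup.mem_center_iff]
      intro y
      rw [← InoueModel.psi_phi y, InoueModel.psi_apply]
      have c0 := (InoueModel.comm0 (r := r)).zpow_right (InoueModel.phi r y).a
      have c1 := (InoueModel.comm1 (r := r)).zpow_right (InoueModel.phi r y).b
      have c2 := (Commute.refl (InoueModel.g r 2)).zpow_right (InoueModel.phi r y).c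
      exact ((c0.mul_right c1).mul_right c2).eq.symm
  · have hinj : Function.Injective (zpowersHom _ (InoueModel.g r 2)) := by
      intro m n h
      have h' := congrArg (InoueModel.phi r) h
      simp only [zpowersHom_apply, map_zpow, InoueModel.phi_of] at h'
      have h2 : InoueModel.gen r 2 = ⟨0, 0, 1⟩ := rfl
      rw [h2, InoueModel.z_zpow, InoueModel.z_zpow] at h'
      exact congrArg InoueModel.c h'
    exact ⟨(MonoidHom.ofInjective hinj).symm⟩
end
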